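/- For every integer k with k ≥ 2mρ, the k-th Fourier coefficient of e^{2 Im g_+} satisfies |(1/2π) ∫_{−π}^{π} e^{2 Im g_+(θ)} e^{−ikθ} dθ| ≤ 2 e^{ρ} · ρ^{⌈k/m⌉} / ⌈k/m⌉!. -/

import Mathlib

open Real MeasureTheory

noncomputable section

/-!
Write `q = -i g₊`, viewed as a polynomial in `z = e^{iθ}`. On the unit circle
`e^{2 Im g₊} = e^q · conj (e^q)`, so the `k`-th Fourier coefficient is the `L²` pairing of `e^q`
with `z ^ k e^q`. The latter is orthogonal to every polynomial of degree `< k`, so `e^q` may be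
replaced by `e^q - P` for any such `P`. The `n`-th Taylor term of `e^q` has degree at most `n m`;
taking for `P` the terms with `n < ⌈k / m⌉` leaves the tail of the exponential series, which is at
most twice its first term because `2 ‖q‖ ≤ 2 ρ ≤ k / m`. Finally `‖g₊‖ ≤ ρ` by Cauchy–Schwarz and
the logarithmic bound on harmonic numbers.
-/

open Metric Polynomial
open scoped ComplexConjugate

section CircleAverage

variable {E : Type*} [NormedAddCommGroup E] [NormedSpace ℝ E]

theorem circleAverage_eq_integral_neg_pi_pi (f : ℂ → E) (c : ℂ) (R : ℝ) :
    circleAverage f c R = (2 * π)⁻¹ • ∫ θ in (-π)..π, f (circleMap c R θ) := by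
  have hper : Function.Periodic (fun θ ↦ f (circleMap c R θ)) (2 * π) :=
    (periodic_circleMap c R).comp f
  rw [circleAverage_def, ← zero_add (2 * π), hper.intervalIntegral_add_eq 0 (-π), zero_add,
    show -π + 2 * π = π by ring]

theorem fourierIntegral_eq_circleAverage (f : ℂ → ℂ) (k : ℕ) :
    (1 / (2 * π) : ℂ) * ∫ θ in (-π)..π, f (circleMap 0 1 θ) * Complex.exp (-Complex.I * k * θ)
      = circleAverage (fun z ↦ f z * conj (z ^ k)) 0 1 := by
  have hchar : ∀ θ : ℝ, Complex.exp (-Complex.I * k * θ) = conj (circleMap 0 1 θ ^ k) := by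
    intro θ
    rw [circleMap_zero, Complex.ofReal_one, one_mul, ← Complex.exp_nat_mul, ← Complex.exp_conj]
    congr 1
    simp only [map_mul, map_natCast, Complex.conj_ofReal, Complex.conj_I]
    ring
  rw [circleAverage_eq_integral_neg_pi_pi, Complex.real_smul]
  simp only [hchar, one_div, Complex.ofReal_inv, Complex.ofReal_mul, Complex.ofReal_ofNat]

theorem norm_circleAverage_le_of_norm_le_const {f : ℂ → E} {c : ℂ} {R M : ℝ}
    (hf : ∀ z ∈ sphere c |R|, ‖f z‖ ≤ M) : ‖circleAverage f c R‖ ≤ M := by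
  have hint := intervalIntegral.norm_integral_le_of_norm_le_const (a := 0) (b := 2 * π)
    fun θ _ ↦ hf _ (circleMap_mem_sphere' c R θ)
  rw [sub_zero, abs_of_pos two_pi_pos] at hint
  rw [circleAverage_def, norm_smul, norm_inv, Real.norm_of_nonneg two_pi_pos.le]
  exact (inv_mul_le_iff₀' two_pi_pos).mpr hint

end CircleAverage

section Orthogonality

variable {P : ℂ[X]} {F : ℂ → ℂ} {k : ℕ}

theorem eval_mul_conj_pow_of_norm_eq_one (hP : P.degree < k) {z : ℂ} (hz : ‖z‖ = 1) :
    P.eval z * conj (z ^ k)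
      = conj (∑ i ∈ Finset.range k, conj (P.coeff i) * z ^ (k - i)) := by
  obtain rfl | hP0 := eq_or_ne P 0
  · simp
  have hz1 : z * conj z = 1 := by simp [Complex.mul_conj', hz]
  rw [eval_eq_sum_range' ((natDegree_lt_iff_degree_lt hP0).mpr hP), Finset.sum_mul, map_sum]
  refine Finset.sum_congr rfl fun i hi ↦ ?_
  calc P.coeff i * z ^ i * conj (z ^ k)
      = P.coeff i * z ^ i * conj (z ^ i * z ^ (k - i)) := by
        rw [pow_mul_pow_sub z (Finset.mem_range.mp hi).le]
    _ = P.coeff i * (z * conj z) ^ i * conj z ^ (k - i) := by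
        simp only [map_mul, map_pow]
        ring
    _ = conj (conj (P.coeff i) * z ^ (k - i)) := by
        simp [hz1]

theorem circleAverage_eval_mul_conj_pow_mul_eq_zero (hP : P.degree < k)
    (hF : DiffContOnCl ℂ F (ball 0 1)) :
    circleAverage (fun z ↦ P.eval z * conj (z ^ k * F z)) 0 1 = 0 := by
  let G : ℂ → ℂ := fun z ↦ ∑ i ∈ Finset.range k, conj (P.coeff i) * z ^ (k - i)
  have hG0 : G 0 = 0 := Finset.sum_eq_zero fun i hi ↦ by
    rw [zero_pow (Nat.sub_ne_zero_of_lt (Finset.mem_range.mp hi)), mul_zero]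
  have hGF : DiffContOnCl ℂ (fun z ↦ G z * F z) (ball 0 |1|) := by
    rw [abs_one]
    exact (show Differentiable ℂ G by fun_prop).diffContOnCl.smul hF
  have hcont : ContinuousOn (fun z ↦ G z * F z) (sphere 0 |1|) :=
    hGF.continuousOn_ball.mono sphere_subset_closedBall
  calc circleAverage (fun z ↦ P.eval z * conj (z ^ k * F z)) 0 1
      = circleAverage (Complex.conjCLE.toContinuousLinearMap ∘ fun z ↦ G z * F z) 0 1 :=
        circleAverage_congr_sphere fun z hz ↦ by
          have hPG : P.eval z * conj (z ^ k) = conj (G z) :=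
            eval_mul_conj_pow_of_norm_eq_one hP (by simpa using hz)
          simp [← hPG, mul_assoc]
    _ = conj (circleAverage (fun z ↦ G z * F z) 0 1) :=
        ContinuousLinearMap.circleAverage_comp_comm _ hcont.circleIntegrable'
    _ = 0 := by rw [hGF.circleAverage, hG0, zero_mul, map_zero]

theorem norm_circleAverage_mul_conj_pow_mul_le {f : ℂ → ℂ} {ε M : ℝ} (hP : P.degree < k)
    (hf : ContinuousOn f (sphere 0 1)) (hfP : ∀ z ∈ sphere 0 1, ‖f z - P.eval z‖ ≤ ε)
    (hF : DiffContOnCl ℂ F (ball 0 1)) (hFM : ∀ z ∈ sphere 0 1, ‖F z‖ ≤ M) :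
    ‖circleAverage (fun z ↦ f z * conj (z ^ k * F z)) 0 1‖ ≤ ε * M := by
  have hFc : ContinuousOn F (sphere 0 1) := hF.continuousOn_ball.mono sphere_subset_closedBall
  have hsub : circleAverage (fun z ↦ f z * conj (z ^ k * F z)) 0 1
      = circleAverage (fun z ↦ (f z - P.eval z) * conj (z ^ k * F z)) 0 1 := by
    simp only [sub_mul]
    rw [circleAverage_fun_sub, circleAverage_eval_mul_conj_pow_mul_eq_zero hP hF, sub_zero]
    all_goals
      refine ContinuousOn.circleIntegrable zero_le_one ?_
      fun_prop
  rw [hsub]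
  refine norm_circleAverage_le_of_norm_le_const fun z hz ↦ ?_
  rw [abs_one] at hz
  have hz1 : ‖z‖ = 1 := by simpa using hz
  calc ‖(f z - P.eval z) * conj (z ^ k * F z)‖ = ‖f z - P.eval z‖ * ‖F z‖ := by
        simp [hz1]
    _ ≤ ε * M := mul_le_mul (hfP z hz) (hFM z hz) (norm_nonneg _)
        ((norm_nonneg _).trans (hfP z hz))

end Orthogonality

section Exponential

theorem exists_degree_lt_norm_exp_eval_sub_eval_le {q : ℂ[X]} {k N : ℕ} {r : ℝ}
    (hdeg : ∀ n < N, n * q.natDegree < k) (hr : 2 * r ≤ N + 1) :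
    ∃ P : ℂ[X], P.degree < k ∧ ∀ z, ‖q.eval z‖ ≤ r →
      ‖Complex.exp (q.eval z) - P.eval z‖ ≤ 2 * r ^ N / N.factorial := by
  refine ⟨∑ n ∈ Finset.range N, C (n.factorial : ℂ)⁻¹ * q ^ n, ?_, fun z hz ↦ ?_⟩
  · rw [← mem_degreeLT]
    refine Submodule.sum_mem _ fun n hn ↦ mem_degreeLT.mpr ?_
    have hnat : (C (n.factorial : ℂ)⁻¹ * q ^ n).natDegree < k :=
      ((natDegree_C_mul_le _ _).trans natDegree_pow_le).trans_lt (hdeg n (Finset.mem_range.mp hn))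
    exact degree_le_natDegree.trans_lt (by exact_mod_cast hnat)
  · have hratio : ‖q.eval z‖ / N.succ ≤ 1 / 2 := by
      rw [div_le_iff₀ (by positivity)]
      push_cast
      linarith
    calc ‖Complex.exp (q.eval z)
          - (∑ n ∈ Finset.range N, C (n.factorial : ℂ)⁻¹ * q ^ n).eval z‖
        = ‖Complex.exp (q.eval z) - ∑ n ∈ Finset.range N, q.eval z ^ n / n.factorial‖ := by
          simp only [eval_finsetSum, eval_mul, eval_C, eval_pow, div_eq_inv_mul]
      _ ≤ ‖q.eval z‖ ^ N / N.factorial * 2 := Complex.exp_bound' hratio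
      _ ≤ r ^ N / N.factorial * 2 := by gcongr
      _ = 2 * r ^ N / N.factorial := by ring

theorem norm_circleAverage_exp_eval_mul_conj_pow_mul_exp_eval_le {q : ℂ[X]} {k N : ℕ} {r : ℝ}
    (hdeg : ∀ n < N, n * q.natDegree < k) (hr : 2 * r ≤ N + 1)
    (hq : ∀ z ∈ sphere 0 1, ‖q.eval z‖ ≤ r) :
    ‖circleAverage (fun z ↦ Complex.exp (q.eval z) * conj (z ^ k * Complex.exp (q.eval z))) 0 1‖
      ≤ 2 * Real.exp r * r ^ N / N.factorial := by
  obtain ⟨P, hP, hexp⟩ := exists_degree_lt_norm_exp_eval_sub_eval_le hdeg hr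
  have hdiff : Differentiable ℂ fun z ↦ Complex.exp (q.eval z) := by fun_prop
  have hM : ∀ z ∈ sphere (0 : ℂ) 1, ‖Complex.exp (q.eval z)‖ ≤ Real.exp r := fun z hz ↦
    (Complex.norm_exp_le_exp_norm _).trans (Real.exp_le_exp.mpr (hq z hz))
  calc _ ≤ 2 * r ^ N / N.factorial * Real.exp r :=
        norm_circleAverage_mul_conj_pow_mul_le hP hdiff.continuous.continuousOn
          (fun z hz ↦ hexp z (hq z hz)) hdiff.diffContOnCl hM
    _ = _ := by ring

theorem ofReal_exp_two_mul_im (w : ℂ) :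
    (Real.exp (2 * w.im) : ℂ)
      = Complex.exp (-Complex.I * w) * conj (Complex.exp (-Complex.I * w)) := by
  rw [← Complex.exp_conj, ← Complex.exp_add, Complex.add_conj, Complex.ofReal_exp]
  simp

end Exponential

theorem fourier_coefficient_bound_general {m k : ℕ} (hm : 0 < m) {p : ℂ[X]}
    (hp : p.natDegree ≤ m) {ρ : ℝ} (hρ : ∀ z ∈ sphere 0 1, ‖p.eval z‖ ≤ ρ)
    (hk : 2 * m * ρ ≤ k) :
    ‖(1 / (2 * π) : ℂ) * ∫ θ in (-π)..π,
        (Real.exp (2 * (p.eval (circleMap 0 1 θ)).im) : ℂ) * Complex.exp (-Complex.I * k * θ)‖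
      ≤ 2 * Real.exp ρ * ρ ^ ⌈(k : ℝ) / m⌉₊ / (⌈(k : ℝ) / m⌉₊).factorial := by
  have hm' : (0 : ℝ) < m := Nat.cast_pos.mpr hm
  set q : ℂ[X] := C (-Complex.I) * p with hq_def
  have hdeg : ∀ n < ⌈(k : ℝ) / m⌉₊, n * q.natDegree < k := fun n hn ↦ by
    have hnm : (n * m : ℝ) < k := (lt_div_iff₀ hm').mp (Nat.lt_ceil.mp hn)
    exact (Nat.mul_le_mul_left n ((natDegree_C_mul_le _ _).trans hp)).trans_lt
      (by exact_mod_cast hnm)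
  have hr : 2 * ρ ≤ ⌈(k : ℝ) / m⌉₊ + 1 := by
    have hρk : 2 * ρ ≤ k / m := (le_div_iff₀ hm').mpr (by linarith)
    linarith [Nat.le_ceil ((k : ℝ) / m)]
  have hq : ∀ z ∈ sphere 0 1, ‖q.eval z‖ ≤ ρ := fun z hz ↦ by simpa [hq_def] using hρ z hz
  have hfactor : ∀ z, (Real.exp (2 * (p.eval z).im) : ℂ) * conj (z ^ k)
      = Complex.exp (q.eval z) * conj (z ^ k * Complex.exp (q.eval z)) := fun z ↦ by
    rw [ofReal_exp_two_mul_im, map_mul, hq_def, eval_C_mul]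
    ring
  rw [fourierIntegral_eq_circleAverage fun z ↦ (Real.exp (2 * (p.eval z).im) : ℂ)]
  simp only [hfactor]
  exact norm_circleAverage_exp_eval_mul_conj_pow_mul_exp_eval_le hdeg hr hq

section AnalyticPolynomial

variable {m : ℕ}

/-- The trigonometric polynomial `g_+` of the paper, as a polynomial in `z = e^{iθ}`; coordinates
are indexed from `0`, so `ξ j` is the paper's `ξ_{j+1}`. -/
def gPlus (ξ : EuclideanSpace ℝ (Fin m)) : ℂ[X] :=
  ∑ j : Fin m, C ((ξ j / √(j.1 + 1) : ℝ) : ℂ) * X ^ (j.1 + 1)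

theorem natDegree_gPlus_le (ξ : EuclideanSpace ℝ (Fin m)) : (gPlus ξ).natDegree ≤ m :=
  natDegree_sum_le_of_forall_le _ _ fun j _ ↦ (natDegree_C_mul_X_pow_le _ _).trans j.isLt

theorem im_eval_gPlus_circleMap (ξ : EuclideanSpace ℝ (Fin m)) (θ : ℝ) :
    ((gPlus ξ).eval (circleMap 0 1 θ)).im
      = ∑ j : Fin m, ξ j / √(j.1 + 1) * Real.sin ((j.1 + 1) * θ) := by
  simp only [gPlus, eval_finsetSum, eval_C_mul, eval_X_pow, Complex.im_sum, Complex.im_ofReal_mul]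
  refine Finset.sum_congr rfl fun j _ ↦ ?_
  rw [circleMap_zero, Complex.ofReal_one, one_mul, ← Complex.exp_nat_mul, ← mul_assoc]
  exact_mod_cast congrArg _ (Complex.exp_ofReal_mul_I_im ((j.1 + 1) * θ))

theorem sum_norm_div_sqrt_le {𝕜 : Type*} [RCLike 𝕜] (ξ : EuclideanSpace 𝕜 (Fin m)) :
    ∑ j : Fin m, ‖ξ j‖ / √(j.1 + 1) ≤ √(Real.log m + 1) * ‖ξ‖ := by
  have hharm : ∑ j : Fin m, (1 / √((j.1 : ℝ) + 1)) ^ 2 ≤ Real.log m + 1 :=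
    calc ∑ j : Fin m, (1 / √((j.1 : ℝ) + 1)) ^ 2 = ((harmonic m : ℚ) : ℝ) := by
          rw [harmonic, Finset.sum_range, Rat.cast_sum]
          refine Finset.sum_congr rfl fun j _ ↦ ?_
          rw [div_pow, one_pow, Real.sq_sqrt (by positivity)]
          simp
      _ ≤ Real.log m + 1 := (harmonic_le_one_add_log m).trans_eq (add_comm _ _)
  calc ∑ j : Fin m, ‖ξ j‖ / √(j.1 + 1) = ∑ j : Fin m, 1 / √(j.1 + 1) * ‖ξ j‖ := by
        simp only [one_div_mul_eq_div]
    _ ≤ √(∑ j : Fin m, (1 / √((j.1 : ℝ) + 1)) ^ 2) * √(∑ j : Fin m, ‖ξ j‖ ^ 2) :=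
        Real.sum_mul_le_sqrt_mul_sqrt _ _ _
    _ ≤ √(Real.log m + 1) * ‖ξ‖ := by
        rw [EuclideanSpace.norm_eq]
        gcongr

theorem norm_eval_gPlus_le (ξ : EuclideanSpace ℝ (Fin m)) {z : ℂ} (hz : ‖z‖ ≤ 1) :
    ‖(gPlus ξ).eval z‖ ≤ √(Real.log m + 1) * ‖ξ‖ := by
  refine le_trans ?_ (sum_norm_div_sqrt_le ξ)
  rw [gPlus, eval_finsetSum]
  refine norm_sum_le_of_le _ fun j _ ↦ ?_
  calc ‖(C ((ξ j / √(j.1 + 1) : ℝ) : ℂ) * X ^ (j.1 + 1)).eval z‖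
      = ‖ξ j‖ / √(j.1 + 1) * ‖z‖ ^ (j.1 + 1) := by
        rw [eval_C_mul, eval_X_pow, norm_mul, Complex.norm_real, norm_div, norm_pow,
          Real.norm_of_nonneg (Real.sqrt_nonneg _)]
    _ ≤ ‖ξ j‖ / √(j.1 + 1) :=
        mul_le_of_le_one_right (by positivity) (pow_le_one₀ (norm_nonneg z) hz)

end AnalyticPolynomial

/-- **Lemma (bound on Fourier coefficients of `e^{2 Im g₊}`).**
Here `Im g₊(θ) = ∑_{k=1}^m (ξ_k/√k) sin(kθ)` and `ρ = √(log m + 1)·‖ξ‖`. -/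
theorem fourier_coefficient_bound (m : ℕ) (hm : 1 ≤ m) (ξ : EuclideanSpace ℝ (Fin m))
    (ρ : ℝ) (hρ : ρ = Real.sqrt (Real.log m + 1) * ‖ξ‖)
    (k : ℕ) (hk : 2 * m * ρ ≤ (k : ℝ)) :
    ‖(1 / (2 * π) : ℂ) * ∫ θ in (-π)..π,
        (Real.exp (2 * ∑ j : Fin m, ξ j / Real.sqrt (j.1 + 1)
            * Real.sin ((j.1 + 1) * θ)) : ℂ)
          * Complex.exp (-Complex.I * k * θ)‖
      ≤ 2 * Real.exp ρ * ρ ^ ⌈(k : ℝ) / m⌉₊ / (⌈(k : ℝ) / m⌉₊).factorial := by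
  simpa only [im_eval_gPlus_circleMap] using fourier_coefficient_bound_general hm
    (natDegree_gPlus_le ξ) (fun z hz ↦ hρ ▸ norm_eval_gPlus_le ξ (by simp_all)) hk

end
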